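/- Sub-intrinsic property of the constructed cylinders: Let max{2n/(n+2),1} < p < 2n/(n−2)_+ and let u, Q_{4R}, λ_o and the scaling factors μ_{z;ρ}^{(λ)} be as in the construction below. Then for every λ ≥ λ_o, every z_o ∈ Q_{2R} and all radii 0 < ρ ≤ s ≤ R one has ⨍⨍_{Q_s^{(μ_{z_o;ρ}^{(λ)})}(z_o)} |u|^p/((μ_{z_o;ρ}^{(λ)})^{2−𝔭} s^p) dx dt ≤ (μ_{z_o;ρ}^{(λ)})^p λ^p. -/

import Mathlib

open MeasureTheory Set
open scoped ENNReal

noncomputable section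

abbrev Spc (n : ℕ) := EuclideanSpace ℝ (Fin n)
abbrev Vec (N : ℕ) := EuclideanSpace ℝ (Fin N)

variable {n N : ℕ}

/-- The scaled parabolic cylinder `Q_ρ^{(μ)}(z₀)`:
`B_ρ(x₀) × (t₀ − μ^{p−2}ρ^p, t₀ + μ^{p−2}ρ^p)` if `p < 2`, and
`B_{μ^{(2−p)/p}ρ}(x₀) × (t₀ − ρ^p, t₀ + ρ^p)` if `p ≥ 2`. -/
def parCyl (p μ ρ : ℝ) (z₀ : Spc n × ℝ) : Set (Spc n × ℝ) :=
  if p < 2 then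
    Metric.ball z₀.1 ρ ×ˢ Ioo (z₀.2 - μ ^ (p - 2) * ρ ^ p) (z₀.2 + μ ^ (p - 2) * ρ ^ p)
  else
    Metric.ball z₀.1 (μ ^ ((2 - p) / p) * ρ) ×ˢ Ioo (z₀.2 - ρ ^ p) (z₀.2 + ρ ^ p)

/-- The exponent `β := 2 − p + (𝔭 − 2)(2 + n/p)`, where `𝔭 = max{p, 2}`. -/
def betaEx (n : ℕ) (p : ℝ) : ℝ := 2 - p + (max p 2 - 2) * (2 + (n : ℝ) / p)

/-- The scaling factor `μ̃_{z;ρ}^{(λ)} := inf{μ ∈ [1, ∞) :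
(1/|Q_ρ|) ∬_{Q_ρ^{(μ)}(z)} |u|^p/ρ^p ≤ μ^{p−β} λ^p}`. -/
def mutilde (p lam : ℝ) (u : Spc n × ℝ → Vec N) (z : Spc n × ℝ) (ρ : ℝ) : ℝ :=
  sInf {μ : ℝ | 1 ≤ μ ∧
    (∫ w in parCyl p μ ρ z, ‖u w‖ ^ p / ρ ^ p) / (volume (parCyl p 1 ρ z)).toReal
      ≤ μ ^ (p - betaEx n p) * lam ^ p}

/-- The monotonized scaling factor `μ_{z;ρ}^{(λ)} := max_{r ∈ [ρ, R]} μ̃_{z;r}^{(λ)}`. -/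
def muF (p lam R : ℝ) (u : Spc n × ℝ → Vec N) (z : Spc n × ℝ) (ρ : ℝ) : ℝ :=
  sSup (mutilde p lam u z '' Icc ρ R)

/-!
For a fixed radius the mean defining `μ̃` decreases in the scaling factor, because the cylinders
shrink, and it is continuous from the right, because the cylinders are open. Hence the set of
admissible factors is upward closed and contains its infimum `μ̃_{z₀;s}`, and so it also contains
`μ := μ_{z₀;ρ} ≥ μ̃_{z₀;s}`. As `|Q_s^{(μ)}| = μ^{𝔭−2−β} |Q_s|`, the average in the claim is `μ^β`
times that mean, which is at most `μ^{p−β} λ^p`.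
-/

open Filter Topology

theorem parCyl_eq_ball_prod_Ioo (p μ ρ : ℝ) (z : Spc n × ℝ) :
    parCyl p μ ρ z = Metric.ball z.1 (μ ^ ((2 - max p 2) / p) * ρ) ×ˢ
      Ioo (z.2 - μ ^ (p - max p 2) * ρ ^ p) (z.2 + μ ^ (p - max p 2) * ρ ^ p) := by
  unfold parCyl
  split_ifs with h
  · simp [max_eq_right h.le]
  · simp [max_eq_left (not_lt.mp h)]

theorem parCyl_one (p ρ : ℝ) (z : Spc n × ℝ) :
    parCyl p 1 ρ z = Metric.ball z.1 ρ ×ˢ Ioo (z.2 - ρ ^ p) (z.2 + ρ ^ p) := by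
  simp [parCyl]

theorem isOpen_parCyl (p μ ρ : ℝ) (z : Spc n × ℝ) : IsOpen (parCyl p μ ρ z) := by
  rw [parCyl_eq_ball_prod_Ioo]
  exact Metric.isOpen_ball.prod isOpen_Ioo

theorem parCyl_anti {p μ ν ρ : ℝ} (hμ : 0 < μ) (hμν : μ ≤ ν) (hρ : 0 ≤ ρ) (z : Spc n × ℝ) :
    parCyl p ν ρ z ⊆ parCyl p μ ρ z := by
  have hspace : (2 - max p 2) / p ≤ 0 := by
    rcases le_total p 2 with h | h
    · simp [max_eq_right h]
    · rw [max_eq_left h]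
      exact div_nonpos_of_nonpos_of_nonneg (by linarith) (by linarith)
  have htime : p - max p 2 ≤ 0 := sub_nonpos.mpr (le_max_left p 2)
  have hheight : ν ^ (p - max p 2) * ρ ^ p ≤ μ ^ (p - max p 2) * ρ ^ p :=
    mul_le_mul_of_nonneg_right (Real.rpow_le_rpow_of_nonpos hμ hμν htime) (by positivity)
  simp only [parCyl_eq_ball_prod_Ioo]
  exact prod_mono
    (Metric.ball_subset_ball <|
      mul_le_mul_of_nonneg_right (Real.rpow_le_rpow_of_nonpos hμ hμν hspace) hρ)
    (Ioo_subset_Ioo (by linarith) (by linarith))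

theorem parCyl_one_mono {p ρ r : ℝ} (hp : 0 ≤ p) (hρ : 0 ≤ ρ) (h : ρ ≤ r) (z : Spc n × ℝ) :
    parCyl p 1 ρ z ⊆ parCyl p 1 r z := by
  have hpow : ρ ^ p ≤ r ^ p := Real.rpow_le_rpow hρ h hp
  simp only [parCyl_one]
  exact prod_mono (Metric.ball_subset_ball h) (Ioo_subset_Ioo (by linarith) (by linarith))

theorem parCyl_one_subset_of_mem {p a b : ℝ} (hp : 1 ≤ p) (ha : 0 ≤ a) (hb : 0 ≤ b)
    {y z : Spc n × ℝ} (hz : z ∈ parCyl p 1 a y) : parCyl p 1 b z ⊆ parCyl p 1 (a + b) y := by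
  have hpow : a ^ p + b ^ p ≤ (a + b) ^ p := Real.add_rpow_le_rpow_add ha hb hp
  simp only [parCyl_one, mem_prod, Metric.mem_ball, mem_Ioo] at hz ⊢
  obtain ⟨hx, ht⟩ := hz
  exact prod_mono (Metric.ball_subset_ball' (by linarith))
    (Ioo_subset_Ioo (by linarith) (by linarith))

theorem eventually_mem_parCyl {p μ ρ : ℝ} (hμ : μ ≠ 0) {z w : Spc n × ℝ}
    (hw : w ∈ parCyl p μ ρ z) : ∀ᶠ ν in 𝓝 μ, w ∈ parCyl p ν ρ z := by
  have hpow (e c : ℝ) : ContinuousAt (fun ν : ℝ => ν ^ e * c) μ :=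
    (Real.continuousAt_rpow_const _ _ (Or.inl hμ)).mul_const c
  simp only [parCyl_eq_ball_prod_Ioo, mem_prod, Metric.mem_ball, mem_Ioo] at hw ⊢
  obtain ⟨hspace, hlower, hupper⟩ := hw
  exact ((hpow _ _).eventually_const_lt hspace).and <|
    ((continuousAt_const.sub (hpow _ _)).eventually_lt_const hlower).and
      ((continuousAt_const.add (hpow _ _)).eventually_const_lt hupper)

theorem volume_parCyl_ne_top (p μ ρ : ℝ) (z : Spc n × ℝ) : volume (parCyl p μ ρ z) ≠ ∞ := by
  rw [parCyl_eq_ball_prod_Ioo, Measure.volume_eq_prod, Measure.prod_prod]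
  exact ENNReal.mul_ne_top measure_ball_lt_top.ne measure_Ioo_lt_top.ne

theorem volume_real_parCyl_one_pos (p : ℝ) {ρ : ℝ} (hρ : 0 < ρ) (z : Spc n × ℝ) :
    0 < volume.real (parCyl p 1 ρ z) := by
  have hcenter : z ∈ parCyl p 1 ρ z := by
    have hpow : 0 < ρ ^ p := Real.rpow_pos_of_pos hρ p
    rw [parCyl_one]
    exact ⟨Metric.mem_ball_self hρ, by linarith, by linarith⟩
  exact ENNReal.toReal_pos ((isOpen_parCyl p 1 ρ z).measure_pos volume ⟨z, hcenter⟩).ne'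
    (volume_parCyl_ne_top p 1 ρ z)

theorem volume_real_parCyl (p : ℝ) {μ : ℝ} (ρ : ℝ) (hμ : 0 < μ) (z : Spc n × ℝ) :
    volume.real (parCyl p μ ρ z)
      = μ ^ (max p 2 - 2 - betaEx n p) * volume.real (parCyl p 1 ρ z) := by
  have hball (a : ℝ) : volume.real (Metric.ball z.1 (μ ^ a * ρ))
      = μ ^ (a * n) * volume.real (Metric.ball z.1 ρ) := by
    rw [measureReal_def, Measure.addHaar_ball_mul_of_pos _ _ (by positivity), ENNReal.toReal_mul,
      ENNReal.toReal_ofReal (by positivity), finrank_euclideanSpace_fin, measureReal_def,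
      Measure.addHaar_ball_center volume z.1, ← Real.rpow_natCast, ← Real.rpow_mul hμ.le]
  have hinterval (c h : ℝ) (hc : 0 ≤ c) :
      volume.real (Ioo (z.2 - c * h) (z.2 + c * h))
        = c * volume.real (Ioo (z.2 - h) (z.2 + h)) := by
    rw [Real.volume_real_Ioo, Real.volume_real_Ioo, mul_max_of_nonneg _ _ hc]
    ring_nf
  have hexp : max p 2 - 2 - betaEx n p = (2 - max p 2) / p * n + (p - max p 2) := by
    rw [betaEx]
    ring
  rw [parCyl_one, parCyl_eq_ball_prod_Ioo, Measure.volume_eq_prod, measureReal_prod_prod,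
    measureReal_prod_prod, hball, hinterval _ _ (by positivity), hexp, Real.rpow_add hμ]
  ring

theorem betaEx_lt_iff {p : ℝ} :
    betaEx n p < p ↔ 1 < p ∧ ((n : ℝ) ≤ 2 ∨ p < 2 * (n : ℝ) / ((n : ℝ) - 2)) := by
  rcases lt_or_ge p 2 with hp | hp
  · have hrange : (n : ℝ) ≤ 2 ∨ p < 2 * (n : ℝ) / ((n : ℝ) - 2) := by
      refine (le_or_gt (n : ℝ) 2).imp_right fun h => ?_
      rw [lt_div_iff₀ (by linarith)]
      nlinarith
    rw [betaEx, max_eq_right hp.le, and_iff_left hrange]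
    constructor <;> intro h <;> linarith
  · have hgap : p - betaEx n p = (2 * n - p * ((n : ℝ) - 2)) / p := by
      rw [betaEx, max_eq_left hp]
      field_simp
      ring
    rw [← sub_pos, hgap, div_pos_iff_of_pos_right (by linarith), sub_pos,
      and_iff_right (by linarith)]
    rcases le_or_gt (n : ℝ) 2 with h | h
    · exact iff_of_true (by nlinarith [n.cast_nonneg (α := ℝ)]) (Or.inl h)
    · rw [or_iff_right h.not_ge, lt_div_iff₀ (by linarith)]

theorem tendsto_setIntegral_parCyl {E : Type*} [NormedAddCommGroup E] [NormedSpace ℝ E]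
    {p μ r : ℝ} {z : Spc n × ℝ} {f : Spc n × ℝ → E} {a : ℕ → ℝ} (hμ : 0 < μ) (hr : 0 ≤ r)
    (ha : Antitone a) (hlim : Tendsto a atTop (𝓝 μ)) (hf : IntegrableOn f (parCyl p μ r z)) :
    Tendsto (fun k => ∫ w in parCyl p (a k) r z, f w) atTop
      (𝓝 (∫ w in parCyl p μ r z, f w)) := by
  have hle (k : ℕ) : μ ≤ a k := ha.le_of_tendsto hlim k
  have hunion : ⋃ k, parCyl p (a k) r z = parCyl p μ r z := by
    refine subset_antisymm (iUnion_subset fun k => parCyl_anti hμ (hle k) hr z) fun w hw => ?_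
    exact mem_iUnion.mpr (hlim.eventually (eventually_mem_parCyl hμ.ne' hw)).exists
  rw [← hunion] at hf ⊢
  exact tendsto_setIntegral_of_monotone (fun k => (isOpen_parCyl p (a k) r z).measurableSet)
    (fun i j hij => parCyl_anti (hμ.trans_le (hle j)) (ha hij) hr z) hf

/-- The quantity `(1/|Q_ρ|) ∬_{Q_ρ^{(μ)}(z)} |u|^p/ρ^p` as a function of `μ`: the integral is over
the scaled cylinder but it is normalized by the volume of the unscaled one. -/
def rescaledMean (p : ℝ) (u : Spc n × ℝ → Vec N) (z : Spc n × ℝ) (ρ μ : ℝ) : ℝ :=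
  (∫ w in parCyl p μ ρ z, ‖u w‖ ^ p / ρ ^ p) / (volume (parCyl p 1 ρ z)).toReal

/-- The scaling factors over which the infimum defining `μ̃_{z;ρ}^{(λ)}` is taken. -/
def admissibleScales (p lam : ℝ) (u : Spc n × ℝ → Vec N) (z : Spc n × ℝ) (ρ : ℝ) : Set ℝ :=
  {μ | 1 ≤ μ ∧ rescaledMean p u z ρ μ ≤ μ ^ (p - betaEx n p) * lam ^ p}

theorem mutilde_eq_sInf_admissibleScales (p lam : ℝ) (u : Spc n × ℝ → Vec N) (z : Spc n × ℝ)
    (ρ : ℝ) : mutilde p lam u z ρ = sInf (admissibleScales p lam u z ρ) := rfl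

section Scaling

variable {p lam r R ρ μ ν : ℝ} {u : Spc n × ℝ → Vec N} {z : Spc n × ℝ}

theorem setAverage_parCyl_eq_rpow_mul_rescaledMean (hμ : 0 < μ) :
    ⨍ w in parCyl p μ r z, ‖u w‖ ^ p / (μ ^ (2 - max p 2) * r ^ p)
      = μ ^ betaEx n p * rescaledMean p u z r μ := by
  have hβ : μ ^ betaEx n p = (μ ^ (max p 2 - 2 - betaEx n p))⁻¹ * (μ ^ (2 - max p 2))⁻¹ := by
    rw [← Real.rpow_neg hμ.le, ← Real.rpow_neg hμ.le, ← Real.rpow_add hμ]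
    ring_nf
  rw [setAverage_eq, smul_eq_mul, volume_real_parCyl p r hμ, rescaledMean, integral_div,
    integral_div, measureReal_def, hβ]
  ring

theorem rescaledMean_anti (hμ : 0 < μ) (hμν : μ ≤ ν) (hr : 0 ≤ r)
    (hint : IntegrableOn (fun w => ‖u w‖ ^ p) (parCyl p μ r z)) :
    rescaledMean p u z r ν ≤ rescaledMean p u z r μ :=
  div_le_div_of_nonneg_right
    (setIntegral_mono_set (hint.div_const _) (Eventually.of_forall fun _ => by positivity)
      (parCyl_anti hμ hμν hr z).eventuallyLE)
    ENNReal.toReal_nonneg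

theorem rescaledMean_one_le (hp : 0 ≤ p) (hρ : 0 < ρ) (hρr : ρ ≤ r) (hrR : r ≤ R)
    (hint : IntegrableOn (fun w => ‖u w‖ ^ p) (parCyl p 1 R z)) :
    rescaledMean p u z r 1
      ≤ (∫ w in parCyl p 1 R z, ‖u w‖ ^ p) / ρ ^ p / volume.real (parCyl p 1 ρ z) := by
  have hvol : volume.real (parCyl p 1 ρ z) ≤ volume.real (parCyl p 1 r z) :=
    measureReal_mono (parCyl_one_mono hp hρ.le hρr z) (volume_parCyl_ne_top p 1 r z)
  have hmono : ∫ w in parCyl p 1 r z, ‖u w‖ ^ p ≤ ∫ w in parCyl p 1 R z, ‖u w‖ ^ p :=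
    setIntegral_mono_set hint (Eventually.of_forall fun _ => by positivity)
      (parCyl_one_mono hp (hρ.le.trans hρr) hrR z).eventuallyLE
  rw [rescaledMean, integral_div]
  have hpos := volume_real_parCyl_one_pos p hρ z
  exact div_le_div₀ (by positivity) (by gcongr) hpos hvol

theorem bddBelow_admissibleScales : BddBelow (admissibleScales p lam u z r) :=
  ⟨1, fun _ h => h.1⟩

theorem mem_admissibleScales_of_le (hβ : betaEx n p < p) (hlam : 0 ≤ lam) (hr : 0 ≤ r)
    (hint : IntegrableOn (fun w => ‖u w‖ ^ p) (parCyl p 1 r z))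
    (hμ : μ ∈ admissibleScales p lam u z r) (hμν : μ ≤ ν) :
    ν ∈ admissibleScales p lam u z r := by
  obtain ⟨hμ1, hmean⟩ := hμ
  have hμ0 : 0 < μ := one_pos.trans_le hμ1
  refine ⟨hμ1.trans hμν, ?_⟩
  calc rescaledMean p u z r ν
      ≤ rescaledMean p u z r μ :=
        rescaledMean_anti hμ0 hμν hr (hint.mono_set (parCyl_anti one_pos hμ1 hr z))
    _ ≤ μ ^ (p - betaEx n p) * lam ^ p := hmean
    _ ≤ ν ^ (p - betaEx n p) * lam ^ p := by
        have := (sub_pos.mpr hβ).le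
        gcongr

theorem mutilde_mem_admissibleScales (hβ : betaEx n p < p) (hr : 0 ≤ r)
    (hint : IntegrableOn (fun w => ‖u w‖ ^ p) (parCyl p 1 r z))
    (hne : (admissibleScales p lam u z r).Nonempty) :
    mutilde p lam u z r ∈ admissibleScales p lam u z r := by
  rw [mutilde_eq_sInf_admissibleScales]
  set m := sInf (admissibleScales p lam u z r)
  have hm : 1 ≤ m := le_csInf hne fun _ h => h.1
  have hm0 : 0 < m := one_pos.trans_le hm
  obtain ⟨a, ha, hlim, hmem⟩ := exists_seq_tendsto_sInf hne bddBelow_admissibleScales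
  have hmean : Tendsto (fun k => rescaledMean p u z r (a k)) atTop (𝓝 (rescaledMean p u z r m)) :=
    (tendsto_setIntegral_parCyl hm0 hr ha hlim
      ((hint.mono_set (parCyl_anti one_pos hm hr z)).div_const _)).div_const _
  have hbound : Tendsto (fun k => a k ^ (p - betaEx n p) * lam ^ p) atTop
      (𝓝 (m ^ (p - betaEx n p) * lam ^ p)) :=
    (hlim.rpow_const (Or.inr (sub_pos.mpr hβ).le)).mul_const _
  exact ⟨hm, le_of_tendsto_of_tendsto' hmean hbound fun k => (hmem k).2⟩

theorem exists_forall_mem_admissibleScales (hβ : betaEx n p < p) (hlam : 0 < lam) (hρ : 0 < ρ)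
    (hint : IntegrableOn (fun w => ‖u w‖ ^ p) (parCyl p 1 R z)) :
    ∃ M, ∀ r ∈ Icc ρ R, M ∈ admissibleScales p lam u z r := by
  have hp : 0 ≤ p := by linarith [(betaEx_lt_iff.mp hβ).1]
  have hgrowth : Tendsto (fun μ : ℝ => μ ^ (p - betaEx n p) * lam ^ p) atTop atTop :=
    (tendsto_rpow_atTop (sub_pos.mpr hβ)).atTop_mul_const (by positivity)
  obtain ⟨M, hM, hM1⟩ := ((hgrowth.eventually_ge_atTop
    ((∫ w in parCyl p 1 R z, ‖u w‖ ^ p) / ρ ^ p / volume.real (parCyl p 1 ρ z))).and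
    (eventually_ge_atTop 1)).exists
  refine ⟨M, fun r ⟨hρr, hrR⟩ => ⟨hM1, ?_⟩⟩
  have hr : 0 ≤ r := hρ.le.trans hρr
  calc rescaledMean p u z r M
      ≤ rescaledMean p u z r 1 :=
        rescaledMean_anti one_pos hM1 hr (hint.mono_set (parCyl_one_mono hp hr hrR z))
    _ ≤ _ := rescaledMean_one_le hp hρ hρr hrR hint
    _ ≤ M ^ (p - betaEx n p) * lam ^ p := hM

theorem muF_mem_admissibleScales (hβ : betaEx n p < p) (hlam : 0 < lam) (hρ : 0 < ρ)
    (hr : r ∈ Icc ρ R) (hint : IntegrableOn (fun w => ‖u w‖ ^ p) (parCyl p 1 R z)) :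
    muF p lam R u z ρ ∈ admissibleScales p lam u z r := by
  have hp : 0 ≤ p := by linarith [(betaEx_lt_iff.mp hβ).1]
  have hr0 : 0 ≤ r := hρ.le.trans hr.1
  have hint_r := hint.mono_set (parCyl_one_mono hp hr0 hr.2 z)
  obtain ⟨M, hM⟩ := exists_forall_mem_admissibleScales hβ hlam hρ hint
  have hbdd : BddAbove (mutilde p lam u z '' Icc ρ R) :=
    ⟨M, forall_mem_image.mpr fun t ht => csInf_le bddBelow_admissibleScales (hM t ht)⟩
  exact mem_admissibleScales_of_le hβ hlam.le hr0 hint_r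
    (mutilde_mem_admissibleScales hβ hr0 hint_r ⟨M, hM r hr⟩) (le_csSup hbdd ⟨r, hr, rfl⟩)

end Scaling

theorem subintrinsic_of_construction_general {p lam R ρ s : ℝ} {u : Spc n × ℝ → Vec N}
    {z : Spc n × ℝ} (hβ : betaEx n p < p) (hlam : 0 < lam)
    (hint : IntegrableOn (fun w => ‖u w‖ ^ p) (parCyl p 1 R z))
    (hρ : 0 < ρ) (hρs : ρ ≤ s) (hsR : s ≤ R) :
    ⨍ w in parCyl p (muF p lam R u z ρ) s z,
        ‖u w‖ ^ p / ((muF p lam R u z ρ) ^ (2 - max p 2) * s ^ p)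
      ≤ (muF p lam R u z ρ) ^ p * lam ^ p := by
  obtain ⟨hμ1, hmean⟩ := muF_mem_admissibleScales hβ hlam hρ ⟨hρs, hsR⟩ hint
  set μ := muF p lam R u z ρ
  have hμ : 0 < μ := one_pos.trans_le hμ1
  calc ⨍ w in parCyl p μ s z, ‖u w‖ ^ p / (μ ^ (2 - max p 2) * s ^ p)
      = μ ^ betaEx n p * rescaledMean p u z s μ := setAverage_parCyl_eq_rpow_mul_rescaledMean hμ
    _ ≤ μ ^ betaEx n p * (μ ^ (p - betaEx n p) * lam ^ p) := by gcongr
    _ = μ ^ p * lam ^ p := by rw [← mul_assoc, ← Real.rpow_add hμ, add_sub_cancel]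

/-- Sub-intrinsic property of the constructed cylinders: let
`max{2n/(n+2), 1} < p < 2n/(n−2)₊`. Then for every `λ ≥ λ₀`, every `z₀ ∈ Q_{2R}` and all
radii `0 < ρ ≤ s ≤ R`:
`⨍⨍_{Q_s^{(μ_{z₀;ρ}^{(λ)})}(z₀)} |u|^p/((μ_{z₀;ρ}^{(λ)})^{2−𝔭} s^p) ≤ (μ_{z₀;ρ}^{(λ)})^p λ^p`. -/
theorem subintrinsic_of_construction (n : ℕ) (p : ℝ) (hn : 1 ≤ n)
    (hp : max (2 * (n : ℝ) / ((n : ℝ) + 2)) 1 < p)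
    (hp' : (n : ℝ) ≤ 2 ∨ p < 2 * (n : ℝ) / ((n : ℝ) - 2)) :
    ∀ (N : ℕ) (T R : ℝ) (Ω : Set (Spc n)) (u : Spc n × ℝ → Vec N)
      (zhat : Spc n × ℝ) (lam₀ lam : ℝ),
      0 < T → IsOpen Ω → Bornology.IsBounded Ω → 0 < R →
      parCyl p 1 (4 * R) zhat ⊆ Ω ×ˢ Ioo 0 T →
      Measurable u →
      MemLp u (ENNReal.ofReal p) (volume.restrict (Ω ×ˢ Ioo 0 T)) →
      1 + (⨍ w in parCyl p 1 (4 * R) zhat, ‖u w‖ ^ p / (4 * R) ^ p) ^ (1 / p) ≤ lam₀ →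
      lam₀ ≤ lam →
      ∀ z₀ ∈ parCyl p 1 (2 * R) zhat, ∀ ρ s : ℝ, 0 < ρ → ρ ≤ s → s ≤ R →
        ⨍ w in parCyl p (muF p lam R u z₀ ρ) s z₀,
            ‖u w‖ ^ p / ((muF p lam R u z₀ ρ) ^ (2 - max p 2) * s ^ p)
          ≤ (muF p lam R u z₀ ρ) ^ p * lam ^ p := by
  intro N T R Ω u zhat lam₀ lam _ _ _ hR hsub _ hu hlam₀ hlam z₀ hz₀ ρ s hρ hρs hsR
  have hp1 : 1 < p := (le_max_right _ _).trans_lt hp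
  have hlam_pos : 0 < lam := by
    have hmean : 0 ≤ ⨍ w in parCyl p 1 (4 * R) zhat, ‖u w‖ ^ p / (4 * R) ^ p :=
      integral_nonneg fun _ => by positivity
    linarith [Real.rpow_nonneg hmean (1 / p)]
  have hcyl : parCyl p 1 R z₀ ⊆ parCyl p 1 (4 * R) zhat :=
    (parCyl_one_subset_of_mem hp1.le (by positivity) hR.le hz₀).trans
      (parCyl_one_mono (by linarith) (by positivity) (by linarith) zhat)
  have hint : IntegrableOn (fun w => ‖u w‖ ^ p) (Ω ×ˢ Ioo 0 T) := by
    simpa [IntegrableOn, (one_pos.trans hp1).le] using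
      hu.integrable_norm_rpow (by simpa using one_pos.trans hp1) ENNReal.ofReal_ne_top
  exact subintrinsic_of_construction_general (betaEx_lt_iff.mpr ⟨hp1, hp'⟩) hlam_pos
    (hint.mono_set (hcyl.trans hsub)) hρ hρs hsR
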